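/- arXiv:2005.13748 — 2 statements merged into one kernel-verified Lean document; each statement's English description precedes it below -/
import Mathlib

section
/- Let γ ∈ (0, 1). If φ : ℝ → ℝ is a convex margin-based loss with φ(α) ≥ 0 for all α, then φ is not (φ_γ, [−1, 1])-calibrated, and φ is not (φ_γ, ℝ)-calibrated. -/
/-- Class-conditional risk of a margin-based loss `φ`:
`C_φ(α, η) = η φ(α) + (1 - η) φ(-α)`. -/
noncomputable def ccr (φ : ℝ → ℝ) (α η : ℝ) : ℝ := η * φ α + (1 - η) * φ (-α)

/-- Minimal class-conditional risk over a set `A` of achievable prediction values. -/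
noncomputable def ccrStar (φ : ℝ → ℝ) (A : Set ℝ) (η : ℝ) : ℝ :=
  sInf ((fun α => ccr φ α η) '' A)

/-- Excess class-conditional risk. -/
noncomputable def ccrExcess (φ : ℝ → ℝ) (A : Set ℝ) (α η : ℝ) : ℝ :=
  ccr φ α η - ccrStar φ A η

/-- `φ` is `(ψ, A)`-calibrated. -/
def Calibrated (φ ψ : ℝ → ℝ) (A : Set ℝ) : Prop :=
  ∀ ε > (0:ℝ), ∃ δ > (0:ℝ), ∀ η ∈ Set.Icc (0:ℝ) 1, ∀ α ∈ A,
    ccr φ α η < ccrStar φ A η + δ → ccr ψ α η < ccrStar ψ A η + ε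

/-- The `γ`-robust 0-1 loss `φ_γ(α) = 1{α ≤ γ}` (the 0-1 loss is the case `γ = 0`). -/
noncomputable def robustLoss (γ : ℝ) (α : ℝ) : ℝ := if α ≤ γ then 1 else 0

/-- Quasiconcavity of a real function on ℝ. -/
def QuasiconcaveFn (h : ℝ → ℝ) : Prop :=
  ∀ α₁ α₂ l : ℝ, 0 ≤ l → l ≤ 1 → min (h α₁) (h α₂) ≤ h (l * α₁ + (1 - l) * α₂)

/-- `φ` is quasiconcave even if its even part `α ↦ φ(α) + φ(-α)` is quasiconcave. -/
def QuasiconcaveEven (φ : ℝ → ℝ) : Prop := QuasiconcaveFn (fun α => φ α + φ (-α))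

/-!
Convexity makes the prediction `0` optimal for `φ` when both labels are equally likely, because
`C_φ(α, 1/2)` is the average of `φ α` and `φ (-α)`, which is at least `φ 0`. Calibration would make
`0` optimal for the robust loss as well. But `0` lies within the margin `γ` for both labels and has
risk `1`, whereas a prediction `α` with `|α| > γ` is charged for only one of them and has risk
`1/2`.
-/

section Risk

variable {φ ψ : ℝ → ℝ} {A : Set ℝ} {α η : ℝ}

theorem ccr_nonneg (hφ : ∀ α, 0 ≤ φ α) (hη : η ∈ Set.Icc (0 : ℝ) 1) (α : ℝ) :
    0 ≤ ccr φ α η :=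
  add_nonneg (mul_nonneg hη.1 (hφ α)) (mul_nonneg (sub_nonneg.2 hη.2) (hφ (-α)))

theorem ccrStar_le_ccr (hφ : ∀ α, 0 ≤ φ α) (hη : η ∈ Set.Icc (0 : ℝ) 1) (hα : α ∈ A) :
    ccrStar φ A η ≤ ccr φ α η :=
  csInf_le ⟨0, Set.forall_mem_image.2 fun α _ => ccr_nonneg hφ hη α⟩ (Set.mem_image_of_mem _ hα)

theorem ccr_zero (φ : ℝ → ℝ) (η : ℝ) : ccr φ 0 η = φ 0 := by
  rw [ccr, neg_zero]
  ring

theorem ccr_zero_le_ccr_half_of_convexOn {s : Set ℝ} (hφ : ConvexOn ℝ s φ) (hα : α ∈ s)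
    (hα' : -α ∈ s) : ccr φ 0 (1 / 2) ≤ ccr φ α (1 / 2) := by
  have hmid : (1 / 2 : ℝ) • α + (1 - 1 / 2 : ℝ) • (-α) = 0 := by
    simp only [smul_eq_mul]
    ring
  calc
    ccr φ 0 (1 / 2) = φ ((1 / 2 : ℝ) • α + (1 - 1 / 2 : ℝ) • (-α)) := by rw [ccr_zero, hmid]
    _ ≤ ccr φ α (1 / 2) := hφ.2 hα hα' (by norm_num) (by norm_num) (by norm_num)

theorem Calibrated.ccr_le_ccrStar (h : Calibrated φ ψ A) (hη : η ∈ Set.Icc (0 : ℝ) 1)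
    (hα : α ∈ A) (hmin : ccr φ α η ≤ ccrStar φ A η) : ccr ψ α η ≤ ccrStar ψ A η := by
  refine le_of_forall_pos_lt_add fun ε hε => ?_
  obtain ⟨δ, hδ, hδε⟩ := h ε hε
  exact hδε η hη α hα (hmin.trans_lt (lt_add_of_pos_right _ hδ))

theorem Calibrated.ccr_zero_le_ccr_half (h : Calibrated φ ψ A) (hφ : ConvexOn ℝ Set.univ φ)
    (hψ : ∀ α, 0 ≤ ψ α) (h0 : 0 ∈ A) (hα : α ∈ A) :
    ccr ψ 0 (1 / 2) ≤ ccr ψ α (1 / 2) := by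
  have hhalf : (1 / 2 : ℝ) ∈ Set.Icc (0 : ℝ) 1 := by norm_num
  have hmin : ccr φ 0 (1 / 2) ≤ ccrStar φ A (1 / 2) :=
    le_csInf (Set.Nonempty.image _ ⟨0, h0⟩) <| Set.forall_mem_image.2 fun β _ =>
      ccr_zero_le_ccr_half_of_convexOn hφ (Set.mem_univ β) (Set.mem_univ (-β))
  exact (h.ccr_le_ccrStar hhalf h0 hmin).trans (ccrStar_le_ccr hψ hhalf hα)

end Risk

section RobustLoss

variable {γ α : ℝ}

theorem robustLoss_of_le (h : α ≤ γ) : robustLoss γ α = 1 := if_pos h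

theorem robustLoss_of_lt (h : γ < α) : robustLoss γ α = 0 := if_neg h.not_ge

theorem robustLoss_nonneg (γ α : ℝ) : 0 ≤ robustLoss γ α := by
  unfold robustLoss
  positivity

theorem ccr_robustLoss_half_of_lt_abs (hγ : 0 ≤ γ) (hα : γ < |α|) :
    ccr (robustLoss γ) α (1 / 2) = 1 / 2 := by
  rcases lt_abs.1 hα with hpos | hneg
  · rw [ccr, robustLoss_of_lt hpos, robustLoss_of_le (by linarith)]
    norm_num
  · rw [ccr, robustLoss_of_le (by linarith), robustLoss_of_lt hneg]
    norm_num

end RobustLoss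

theorem no_convex_calibrated_surrogate_lin_all_general {γ α : ℝ} (hγ : 0 ≤ γ) {φ : ℝ → ℝ}
    (hconv : ConvexOn ℝ Set.univ φ) {A : Set ℝ} (h0 : 0 ∈ A) (hα : α ∈ A) (hγα : γ < |α|) :
    ¬ Calibrated φ (robustLoss γ) A := by
  intro hcal
  have hle : ccr (robustLoss γ) 0 (1 / 2) ≤ ccr (robustLoss γ) α (1 / 2) :=
    hcal.ccr_zero_le_ccr_half hconv (robustLoss_nonneg γ) h0 hα
  rw [ccr_zero, robustLoss_of_le hγ, ccr_robustLoss_half_of_lt_abs hγ hγα] at hle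
  norm_num at hle

/-- Corollary 1: no convex margin-based surrogate loss is calibrated wrt
`(φ_γ, [-1,1])` (linear models) nor wrt `(φ_γ, ℝ)` (all measurable functions). -/
theorem no_convex_calibrated_surrogate_lin_all
    (γ : ℝ) (hγ : γ ∈ Set.Ioo (0:ℝ) 1)
    (φ : ℝ → ℝ) (hφ : ∀ α, 0 ≤ φ α) (hconv : ConvexOn ℝ Set.univ φ) :
    ¬ Calibrated φ (robustLoss γ) (Set.Icc (-1:ℝ) 1) ∧
    ¬ Calibrated φ (robustLoss γ) Set.univ := by
  have h {A : Set ℝ} (h0 : 0 ∈ A) (h1 : 1 ∈ A) : ¬ Calibrated φ (robustLoss γ) A :=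
    no_convex_calibrated_surrogate_lin_all_general hγ.1.le hconv h0 h1 (by simpa using hγ.2)
  exact ⟨h (by simp) (by simp), h (Set.mem_univ 0) (Set.mem_univ 1)⟩
end

section
/- Let γ ∈ (0, 1), let φ : ℝ → ℝ be a margin-based loss with φ(α) ≥ 0 for all α, and let A ⊆ ℝ be symmetric with [−1, 1] ⊆ A. Then φ is (φ_γ, A)-calibrated if and only if both of the following hold: (i) inf_{α ∈ A, |α| ≤ γ} C_φ(α, 1/2) > inf_{α ∈ A} C_φ(α, 1/2); and (ii) for every η with 1/2 < η ≤ 1, inf_{α ∈ A, α ≤ γ} C_φ(α, η) > inf_{α ∈ A} C_φ(α, η). -/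
/-!
For `η ∈ [1/2, 1]` the `φ_γ`-excess of `α` is `0` if `γ < α`, `2η - 1` if `α < -γ` and `η` if
`|α| ≤ γ`. Calibration bounds the `φ`-excess away from zero wherever the `φ_γ`-excess is at least
`ε`, and applying this at a single `η` gives both strict inequalities. Conversely, the inequalities
hold pointwise in `η` and have to be made uniform over the compact intervals `[1/2, 1]` (for
`|α| ≤ γ`) and `[(1 + ε)/2, 1]` (for `α ≤ γ`). This works because a minimal risk is continuous on
`[0, 1]`: as an infimum of affine functions it is upper semicontinuous and concave, and a concave
function on a closed interval is lower semicontinuous, at the endpoints too. Symmetry of `A` reduces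
`η < 1/2` to `η > 1/2`.
-/

open Set

section Concave

theorem concaveOn_ciInf {E ι : Type*} [AddCommMonoid E] [Module ℝ E] [Nonempty ι] {s : Set E}
    {f : ι → E → ℝ} (hbdd : ∀ x ∈ s, BddBelow (range fun i => f i x))
    (hf : ∀ i, ConcaveOn ℝ s (f i)) : ConcaveOn ℝ s fun x => ⨅ i, f i x := by
  refine ⟨(hf (Classical.arbitrary ι)).1, fun x hx y hy a b ha hb hab => le_ciInf fun i => ?_⟩
  calc a • (⨅ j, f j x) + b • (⨅ j, f j y)
      ≤ a • f i x + b • f i y := by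
        gcongr
        exacts [ciInf_le (hbdd x hx) i, ciInf_le (hbdd y hy) i]
    _ ≤ f i (a • x + b • y) := (hf i).2 hx hy ha hb hab

theorem chord_le_of_concaveOn_uIcc {f : ℝ → ℝ} {x c z : ℝ} (hf : ConcaveOn ℝ (uIcc x c) f)
    (hxc : x ≠ c) (hz : z ∈ uIcc x c) : f x + (z - x) / (c - x) * (f c - f x) ≤ f z := by
  rw [← segment_eq_uIcc, segment_eq_image] at hz
  obtain ⟨t, ⟨ht₀, ht₁⟩, rfl⟩ := hz
  have ht : ((1 - t) • x + t • c - x) / (c - x) = t := by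
    rw [div_eq_iff (sub_ne_zero.2 hxc.symm), smul_eq_mul, smul_eq_mul]
    ring
  calc f x + ((1 - t) • x + t • c - x) / (c - x) * (f c - f x)
      = (1 - t) • f x + t • f c := by
        rw [ht, smul_eq_mul, smul_eq_mul]
        ring
    _ ≤ f ((1 - t) • x + t • c) :=
        hf.2 left_mem_uIcc right_mem_uIcc (sub_nonneg.2 ht₁) ht₀ (sub_add_cancel 1 t)

theorem lowerSemicontinuousWithinAt_of_concaveOn_uIcc {f : ℝ → ℝ} {x c : ℝ}
    (hf : ConcaveOn ℝ (uIcc x c) f) : LowerSemicontinuousWithinAt f (uIcc x c) x := by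
  intro y hy
  rcases eq_or_ne x c with rfl | hxc
  · simpa using hy
  have hchord : Continuous fun z => f x + (z - x) / (c - x) * (f c - f x) := by fun_prop
  have hy' : ∀ᶠ z in nhds x, y < f x + (z - x) / (c - x) * (f c - f x) :=
    hchord.continuousAt.eventually_const_lt (by simpa using hy)
  filter_upwards [self_mem_nhdsWithin, nhdsWithin_le_nhds hy'] with z hz hyz
  exact hyz.trans_le (chord_le_of_concaveOn_uIcc hf hxc hz)

theorem lowerSemicontinuousOn_of_concaveOn_Icc {f : ℝ → ℝ} {a b : ℝ}
    (hf : ConcaveOn ℝ (Icc a b) f) : LowerSemicontinuousOn f (Icc a b) := by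
  intro x hx y hy
  have key {c : ℝ} (hc : c ∈ Icc a b) : ∀ᶠ z in nhdsWithin x (uIcc x c), y < f z :=
    lowerSemicontinuousWithinAt_of_concaveOn_uIcc
      (hf.subset (uIcc_subset_Icc hx hc) (convex_uIcc x c)) y hy
  have hab : a ≤ b := hx.1.trans hx.2
  rw [← Icc_union_Icc_eq_Icc hx.1 hx.2, nhdsWithin_union, Filter.eventually_sup,
    ← uIcc_of_ge hx.1, ← uIcc_of_le hx.2]
  exact ⟨key (left_mem_Icc.2 hab), key (right_mem_Icc.2 hab)⟩

end Concave

section Risk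

variable {φ ψ : ℝ → ℝ} {A S : Set ℝ} {α η : ℝ}

theorem ccr_neg (φ : ℝ → ℝ) (α η : ℝ) : ccr φ (-α) η = ccr φ α (1 - η) := by
  simp only [ccr, neg_neg]
  ring

theorem continuous_ccr (φ : ℝ → ℝ) (α : ℝ) : Continuous (ccr φ α) := by
  unfold ccr
  fun_prop

theorem concaveOn_ccr (φ : ℝ → ℝ) (α : ℝ) {s : Set ℝ} (hs : Convex ℝ s) :
    ConcaveOn ℝ s (ccr φ α) := by
  refine ⟨hs, fun x _ y _ a b _ _ hab => le_of_eq ?_⟩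
  simp only [ccr, smul_eq_mul]
  linear_combination φ (-α) * hab

theorem bddBelow_image_ccr (hφ : BddBelow (φ '' A)) (hsymm : ∀ α ∈ A, -α ∈ A)
    (hη : η ∈ Icc (0 : ℝ) 1) : BddBelow ((fun α => ccr φ α η) '' A) := by
  obtain ⟨m, hm⟩ := hφ
  refine ⟨m, forall_mem_image.2 fun α hα => ?_⟩
  calc m = η * m + (1 - η) * m := by ring
    _ ≤ ccr φ α η := add_le_add
        (mul_le_mul_of_nonneg_left (hm (mem_image_of_mem φ hα)) hη.1)
        (mul_le_mul_of_nonneg_left (hm (mem_image_of_mem φ (hsymm α hα))) (sub_nonneg.2 hη.2))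

theorem ccrStar_le (hbdd : BddBelow ((fun α => ccr φ α η) '' S)) (hα : α ∈ S) :
    ccrStar φ S η ≤ ccr φ α η :=
  csInf_le hbdd (mem_image_of_mem _ hα)

theorem le_ccrStar (hS : S.Nonempty) {c : ℝ} (h : ∀ α ∈ S, c ≤ ccr φ α η) : c ≤ ccrStar φ S η :=
  le_csInf (hS.image _) (forall_mem_image.2 h)

theorem ccrStar_anti (hbdd : BddBelow ((fun α => ccr φ α η) '' A)) (hS : S.Nonempty)
    (hSA : S ⊆ A) : ccrStar φ A η ≤ ccrStar φ S η :=
  csInf_le_csInf hbdd (hS.image _) (image_mono hSA)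

theorem ccrStar_one_sub (φ : ℝ → ℝ) (hsymm : ∀ α ∈ A, -α ∈ A) (η : ℝ) :
    ccrStar φ A (1 - η) = ccrStar φ A η := by
  have hneg : Neg.neg '' A = A := by
    rw [image_neg_eq_neg]
    exact Subset.antisymm (fun α hα => neg_neg α ▸ hsymm _ hα) hsymm
  simp only [ccrStar, ← ccr_neg]
  conv_rhs => rw [← hneg, image_image]

theorem ccrExcess_neg (φ : ℝ → ℝ) (hsymm : ∀ α ∈ A, -α ∈ A) (α η : ℝ) :
    ccrExcess φ A (-α) η = ccrExcess φ A α (1 - η) := by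
  rw [ccrExcess, ccrExcess, ccr_neg, ccrStar_one_sub φ hsymm]

theorem continuousOn_ccrStar (hS : S.Nonempty)
    (hbdd : ∀ η ∈ Icc (0 : ℝ) 1, BddBelow ((fun α => ccr φ α η) '' S)) :
    ContinuousOn (ccrStar φ S) (Icc 0 1) := by
  have : Nonempty S := hS.to_subtype
  have hrange (η : ℝ) (hη : η ∈ Icc (0 : ℝ) 1) : BddBelow (range fun α : S => ccr φ α η) :=
    image_eq_range (fun α => ccr φ α η) S ▸ hbdd η hη
  have hinf : ccrStar φ S = fun η => ⨅ α : S, ccr φ α η := funext fun η => sInf_image'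
  rw [hinf, continuousOn_iff_lower_upperSemicontinuousOn]
  exact ⟨lowerSemicontinuousOn_of_concaveOn_Icc
      (concaveOn_ciInf hrange fun α => concaveOn_ccr φ α (convex_Icc 0 1)),
    upperSemicontinuousOn_ciInf hrange fun α =>
      (continuous_ccr φ α).continuousOn.upperSemicontinuousOn⟩

theorem exists_forall_le_ccrExcess {K : Set ℝ} (hφ : BddBelow (φ '' A))
    (hsymm : ∀ α ∈ A, -α ∈ A) (hS : S.Nonempty) (hSA : S ⊆ A) (hK : IsCompact K)
    (hK₁ : K ⊆ Icc 0 1) (hlt : ∀ η ∈ K, ccrStar φ A η < ccrStar φ S η) :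
    ∃ δ > 0, ∀ η ∈ K, ∀ α ∈ S, δ ≤ ccrExcess φ A α η := by
  have hbddA (η : ℝ) (hη : η ∈ Icc (0 : ℝ) 1) := bddBelow_image_ccr hφ hsymm hη
  have hbddS (η : ℝ) (hη : η ∈ Icc (0 : ℝ) 1) := (hbddA η hη).mono (image_mono hSA)
  have hcont : ContinuousOn (fun η => ccrStar φ S η - ccrStar φ A η) K :=
    ((continuousOn_ccrStar hS hbddS).sub (continuousOn_ccrStar (hS.mono hSA) hbddA)).mono hK₁
  obtain ⟨δ, hδ, hle⟩ := hK.exists_forall_le' hcont fun η hη => sub_pos.2 (hlt η hη)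
  exact ⟨δ, hδ, fun η hη α hα =>
    (hle η hη).trans (sub_le_sub_right (ccrStar_le (hbddS η (hK₁ hη)) hα) _)⟩

theorem calibrated_iff_le_ccrExcess : Calibrated φ ψ A ↔
    ∀ ε > 0, ∃ δ > 0, ∀ η ∈ Icc (0 : ℝ) 1, ∀ α ∈ A,
      ε ≤ ccrExcess ψ A α η → δ ≤ ccrExcess φ A α η := by
  simp only [Calibrated, ccrExcess, ← sub_lt_iff_lt_add', ← not_lt, not_imp_not]

theorem calibrated_iff_le_ccrExcess_of_half_le (hsymm : ∀ α ∈ A, -α ∈ A) : Calibrated φ ψ A ↔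
    ∀ ε > 0, ∃ δ > 0, ∀ η ∈ Icc (1 / 2 : ℝ) 1, ∀ α ∈ A,
      ε ≤ ccrExcess ψ A α η → δ ≤ ccrExcess φ A α η := by
  rw [calibrated_iff_le_ccrExcess]
  refine forall₂_congr fun ε _ => exists_congr fun δ => and_congr_right fun _ =>
    ⟨fun h η hη => h η (Icc_subset_Icc_left (by norm_num) hη), fun h η hη α hα => ?_⟩
  rcases le_total (1 / 2) η with hle | hle
  · exact h η ⟨hle, hη.2⟩ α hα
  · have hflip := h (1 - η) ⟨by linarith, by linarith [hη.1]⟩ (-α) (hsymm α hα)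
    simpa only [ccrExcess_neg _ hsymm, sub_sub_cancel] using hflip

theorem Calibrated.ccrStar_lt_ccrStar {ε : ℝ} (hcal : Calibrated φ ψ A) (hη : η ∈ Icc (0 : ℝ) 1)
    (hS : S.Nonempty) (hSA : S ⊆ A) (hε : 0 < ε) (hψ : ∀ α ∈ S, ε ≤ ccrExcess ψ A α η) :
    ccrStar φ A η < ccrStar φ S η := by
  obtain ⟨δ, hδ, hle⟩ := calibrated_iff_le_ccrExcess.1 hcal ε hε
  exact (lt_add_of_pos_right _ hδ).trans_le <| le_ccrStar hS fun α hα =>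
    le_sub_iff_add_le'.1 (hle η hη α (hSA hα) (hψ α hα))

end Risk

section RobustLoss

variable {γ : ℝ} {A : Set ℝ} {α η : ℝ}

theorem ccr_robustLoss (hγ : 0 ≤ γ) (α η : ℝ) :
    ccr (robustLoss γ) α η = if γ < α then 1 - η else if α < -γ then η else 1 := by
  unfold ccr robustLoss
  split_ifs <;> linarith

theorem ccrStar_robustLoss (hγ : 0 ≤ γ) (hA : ∃ α ∈ A, γ < α) (hη : η ∈ Icc (1 / 2 : ℝ) 1) :
    ccrStar (robustLoss γ) A η = 1 - η := by
  obtain ⟨α, hα, hγα⟩ := hA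
  refine IsLeast.csInf_eq ⟨⟨α, hα, ?_⟩, forall_mem_image.2 fun β _ => ?_⟩
  · simp only [ccr_robustLoss hγ, if_pos hγα]
  · rw [ccr_robustLoss hγ]
    split_ifs <;> linarith [hη.1]

theorem ccrExcess_robustLoss (hγ : 0 ≤ γ) (hA : ∃ α ∈ A, γ < α) (hη : η ∈ Icc (1 / 2 : ℝ) 1)
    (α : ℝ) : ccrExcess (robustLoss γ) A α η =
      if γ < α then 0 else if α < -γ then 2 * η - 1 else η := by
  rw [ccrExcess, ccr_robustLoss hγ, ccrStar_robustLoss hγ hA hη]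
  split_ifs <;> ring

theorem ccrExcess_robustLoss_of_abs_le (hγ : 0 ≤ γ) (hA : ∃ α ∈ A, γ < α)
    (hη : η ∈ Icc (1 / 2 : ℝ) 1) (hα : |α| ≤ γ) : ccrExcess (robustLoss γ) A α η = η := by
  rw [ccrExcess_robustLoss hγ hA hη, if_neg (abs_le.1 hα).2.not_gt, if_neg (abs_le.1 hα).1.not_gt]

theorem le_ccrExcess_robustLoss_of_le (hγ : 0 ≤ γ) (hA : ∃ α ∈ A, γ < α)
    (hη : η ∈ Icc (1 / 2 : ℝ) 1) (hα : α ≤ γ) :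
    2 * η - 1 ≤ ccrExcess (robustLoss γ) A α η := by
  rw [ccrExcess_robustLoss hγ hA hη, if_neg hα.not_gt]
  split_ifs <;> linarith [hη.2]

theorem abs_le_or_of_le_ccrExcess_robustLoss {ε : ℝ} (hγ : 0 ≤ γ) (hA : ∃ α ∈ A, γ < α)
    (hη : η ∈ Icc (1 / 2 : ℝ) 1) (hε : 0 < ε) (h : ε ≤ ccrExcess (robustLoss γ) A α η) :
    |α| ≤ γ ∨ α ≤ γ ∧ (1 + ε) / 2 ≤ η := by
  rw [ccrExcess_robustLoss hγ hA hη] at h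
  split_ifs at h with hγα hαγ
  · exact absurd h hε.not_ge
  · exact .inr ⟨not_lt.1 hγα, by linarith⟩
  · exact .inl (abs_le.2 ⟨not_lt.1 hαγ, not_lt.1 hγα⟩)

end RobustLoss

section Characterization

variable {γ : ℝ} {φ : ℝ → ℝ} {A : Set ℝ}

theorem calibrated_robustLoss_of_ccrStar_lt (hφ : BddBelow (φ '' A)) (hsymm : ∀ α ∈ A, -α ∈ A)
    (hmid : ∃ α ∈ A, |α| ≤ γ) (hA : ∃ α ∈ A, γ < α)
    (hmid_lt : ∀ η ∈ Icc (1 / 2 : ℝ) 1, ccrStar φ A η < ccrStar φ {α ∈ A | |α| ≤ γ} η)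
    (hlow_lt : ∀ η ∈ Ioc (1 / 2 : ℝ) 1, ccrStar φ A η < ccrStar φ {α ∈ A | α ≤ γ} η) :
    Calibrated φ (robustLoss γ) A := by
  have hγ : 0 ≤ γ := let ⟨α, _, hα⟩ := hmid; (abs_nonneg α).trans hα
  have hlow : ∃ α ∈ A, α ≤ γ := hmid.imp fun α hα => ⟨hα.1, (abs_le.1 hα.2).2⟩
  refine (calibrated_iff_le_ccrExcess_of_half_le hsymm).2 fun ε hε => ?_
  obtain ⟨δ₁, hδ₁, hmid_le⟩ := exists_forall_le_ccrExcess hφ hsymm hmid (sep_subset _ _)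
    isCompact_Icc (Icc_subset_Icc_left (by norm_num)) hmid_lt
  obtain ⟨δ₂, hδ₂, hlow_le⟩ := exists_forall_le_ccrExcess hφ hsymm hlow (sep_subset _ _)
    isCompact_Icc (Icc_subset_Icc_left (by linarith : (0 : ℝ) ≤ (1 + ε) / 2))
    fun η hη => hlow_lt η ⟨by linarith [hη.1], hη.2⟩
  refine ⟨min δ₁ δ₂, lt_min hδ₁ hδ₂, fun η hη α hα hle => ?_⟩
  rcases abs_le_or_of_le_ccrExcess_robustLoss hγ hA hη hε hle with hαγ | ⟨hαγ, hεη⟩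
  · exact (min_le_left _ _).trans (hmid_le η hη α ⟨hα, hαγ⟩)
  · exact (min_le_right _ _).trans (hlow_le η ⟨hεη, hη.2⟩ α ⟨hα, hαγ⟩)

theorem robust_calibration_characterization_general (hφ : BddBelow (φ '' A))
    (hsymm : ∀ α ∈ A, -α ∈ A) (hmid : ∃ α ∈ A, |α| ≤ γ) (hA : ∃ α ∈ A, γ < α) :
    Calibrated φ (robustLoss γ) A ↔
      (ccrStar φ A (1 / 2) < ccrStar φ {α ∈ A | |α| ≤ γ} (1 / 2) ∧
        ∀ η : ℝ, 1 / 2 < η → η ≤ 1 → ccrStar φ A η < ccrStar φ {α ∈ A | α ≤ γ} η) := by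
  have hγ : 0 ≤ γ := let ⟨α, _, hα⟩ := hmid; (abs_nonneg α).trans hα
  have hsub : {α ∈ A | |α| ≤ γ} ⊆ {α ∈ A | α ≤ γ} := fun α hα => ⟨hα.1, (abs_le.1 hα.2).2⟩
  refine ⟨fun hcal => ⟨?_, fun η hη hη₁ => ?_⟩, fun ⟨hhalf_lt, hlow_lt⟩ => ?_⟩
  · have hhalf : (1 / 2 : ℝ) ∈ Icc (1 / 2) 1 := by norm_num
    exact hcal.ccrStar_lt_ccrStar (by norm_num) hmid (sep_subset _ _) one_half_pos
      fun α hα => (ccrExcess_robustLoss_of_abs_le hγ hA hhalf hα.2).ge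
  · exact hcal.ccrStar_lt_ccrStar ⟨by linarith, hη₁⟩ (.mono hsub hmid) (sep_subset _ _)
      (by linarith : 0 < 2 * η - 1)
      fun α hα => le_ccrExcess_robustLoss_of_le hγ hA ⟨hη.le, hη₁⟩ hα.2
  · refine calibrated_robustLoss_of_ccrStar_lt hφ hsymm hmid hA (fun η ⟨hη, hη₁⟩ => ?_)
      fun η hη => hlow_lt η hη.1 hη.2
    rcases hη.eq_or_lt with rfl | hη
    · exact hhalf_lt
    · have hbdd := bddBelow_image_ccr hφ hsymm ⟨by linarith, hη₁⟩
      exact (hlow_lt η hη hη₁).trans_le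
        (ccrStar_anti (hbdd.mono (image_mono (sep_subset _ _))) hmid hsub)

end Characterization

/-- Lemma (part 3): characterization of `(φ_γ, A)`-calibration for symmetric `A`
with `[-1,1] ⊆ A`. -/
theorem robust_calibration_characterization
    (γ : ℝ) (hγ : γ ∈ Set.Ioo (0:ℝ) 1)
    (φ : ℝ → ℝ) (hφ : ∀ α, 0 ≤ φ α)
    (A : Set ℝ) (hA : Set.Icc (-1:ℝ) 1 ⊆ A) (hsymm : ∀ α ∈ A, -α ∈ A) :
    Calibrated φ (robustLoss γ) A ↔
      (sInf ((fun α => ccr φ α (1/2)) '' A)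
          < sInf ((fun α => ccr φ α (1/2)) '' {α ∈ A | |α| ≤ γ}) ∧
       ∀ η : ℝ, 1/2 < η → η ≤ 1 →
         sInf ((fun α => ccr φ α η) '' A)
            < sInf ((fun α => ccr φ α η) '' {α ∈ A | α ≤ γ})) := by
  exact robust_calibration_characterization_general ⟨0, forall_mem_image.2 fun α _ => hφ α⟩
    hsymm ⟨0, hA (by norm_num), abs_zero.trans_le hγ.1.le⟩ ⟨1, hA (by norm_num), hγ.2⟩
end
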